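/- arXiv:math/0112296 — 3 statements merged into one kernel-verified Lean document; each statement's English description precedes it below -/
import Mathlib

section
/- For every l with 0 ≤ l ≤ a, the volume (with respect to the product Lebesgue measure on ℝ³ × ℝ³) of the set {(A,B) ∈ C × C : dist(A,B) ≤ l} equals (4π/3)·a³l³ − (3π/2)·a²l⁴ + (8/5)·a·l⁵ − l⁶/6. -/
open MeasureTheory Real Set

/-- The cube `[0,a]³` in Euclidean 3-space. -/
def cube (a : ℝ) : Set (EuclideanSpace ℝ (Fin 3)) := {x | ∀ i, x i ∈ Set.Icc 0 a}

noncomputable def wt (a : ℝ) (t : ℝ) : ENNReal := ENNReal.ofReal (a - |t|)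

noncomputable def LL (a : ℝ) (n : ℕ) (s : ℝ) : ENNReal :=
  ∫⁻ v : Fin n → ℝ, (∏ i, wt a (v i)) * (if ∑ i, v i ^ 2 ≤ s then 1 else 0)

lemma measurable_wt (a : ℝ) : Measurable (wt a) := by unfold wt; fun_prop

lemma LL_zero (a s : ℝ) : LL a 0 s = if 0 ≤ s then 1 else 0 := by
  unfold LL
  rw [volume_pi, Measure.pi_of_empty]
  rw [lintegral_dirac]
  simp

lemma LL_succ (a : ℝ) (n : ℕ) (s : ℝ) :
    LL a (n+1) s = ∫⁻ x, wt a x * LL a n (s - x ^ 2) := by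
  have hm := (measurable_wt a)
  unfold LL
  rw [← (volume_preserving_piFinSuccAbove (fun _ : Fin (n+1) => ℝ) 0).symm.lintegral_comp_emb
    (MeasurableEquiv.measurableEmbedding _)]
  rw [Measure.volume_eq_prod, lintegral_prod]
  · refine lintegral_congr fun x => ?_
    rw [← lintegral_const_mul]
    · refine lintegral_congr fun v => ?_
      simp only [MeasurableEquiv.piFinSuccAbove_symm_apply, Fin.insertNthEquiv, Fin.prod_univ_succ, Fin.sum_univ_succ]
      simp [le_sub_iff_add_le, add_comm]
    · refine Measurable.mul (by fun_prop) (Measurable.ite (measurableSet_le (by fun_prop) (by fun_prop)) (by fun_prop) (by fun_prop))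
  · apply Measurable.aemeasurable
    refine Measurable.comp (g := fun v : Fin (n+1) → ℝ => (∏ i, wt a (v i)) * (if ∑ i, v i ^ 2 ≤ s then 1 else 0)) ?_ (MeasurableEquiv.measurable _)
    refine Measurable.mul (by fun_prop) (Measurable.ite (measurableSet_le (by fun_prop) (by fun_prop)) (by fun_prop) (by fun_prop))

lemma LL_neg (a : ℝ) (n : ℕ) (s : ℝ) (hs : s < 0) : LL a n s = 0 := by
  unfold LL
  refine (lintegral_congr fun v => ?_).trans (lintegral_zero (μ := (volume : Measure (Fin n → ℝ))))
  rw [if_neg, mul_zero]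
  have : 0 ≤ ∑ i, v i ^ 2 := Finset.sum_nonneg fun i _ => sq_nonneg _
  linarith

lemma step (a : ℝ) (ha : 0 < a) (n : ℕ) (g : ℝ → ℝ) (r : ℝ) (hr : 0 ≤ r) (hra : r ≤ a)
    (hg : ∀ t, 0 ≤ t → t ≤ a → LL a n (t ^ 2) = ENNReal.ofReal (g (t ^ 2)))
    (hg0 : ∀ t, 0 ≤ t → t ≤ a → 0 ≤ g (t ^ 2))
    (hc : Continuous g) :
    LL a (n+1) (r ^ 2) = ENNReal.ofReal (2 * ∫ y in 0..r, (a - y) * g (r ^ 2 - y ^ 2)) ∧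
    0 ≤ 2 * ∫ y in 0..r, (a - y) * g (r ^ 2 - y ^ 2) := by
  have key : ∀ y, 0 ≤ y → y ≤ r → LL a n (r^2 - y^2) = ENNReal.ofReal (g (r^2 - y^2)) ∧
      0 ≤ g (r^2 - y^2) := by
    intro y h0 h1
    have h2 : 0 ≤ r^2 - y^2 := by nlinarith
    have h3 : √(r^2 - y^2) ≤ a := by
      rw [Real.sqrt_le_left ha.le]; nlinarith
    have := hg _ (Real.sqrt_nonneg _) h3
    have h4 := hg0 _ (Real.sqrt_nonneg _) h3
    rw [Real.sq_sqrt h2] at this h4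
    exact ⟨this, h4⟩
  set G : ℝ → ℝ := fun y => (a - y) * g (r ^ 2 - y ^ 2) with hG
  have hH : ∀ x, (Iic r).indicator G |x| = (Icc (-r) r).indicator (fun x => G |x|) x := by
    intro x
    by_cases h : |x| ≤ r
    · rw [indicator_of_mem (show |x| ∈ Iic r from h), indicator_of_mem (show x ∈ Icc (-r) r from abs_le.1 h)]
    · rw [indicator_of_notMem (show |x| ∉ Iic r from h), indicator_of_notMem (show x ∉ Icc (-r) r from fun hx => h (abs_le.2 hx))]
  have hE : 2 * ∫ y in 0..r, G y = ∫ x, (Iic r).indicator G |x| := by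
    rw [integral_comp_abs, setIntegral_indicator measurableSet_Iic, Ioi_inter_Iic,
      intervalIntegral.integral_of_le hr]
  have hnn : ∀ x, 0 ≤ (Iic r).indicator G |x| := by
    intro x
    apply indicator_apply_nonneg
    intro hx
    exact mul_nonneg (by have : |x| ≤ r := hx; linarith) (key _ (abs_nonneg x) hx).2
  have hI : Integrable (fun x => (Iic r).indicator G |x|) := by
    simp_rw [hH]
    rw [integrable_indicator_iff measurableSet_Icc]
    apply ContinuousOn.integrableOn_Icc
    simp only [hG]
    fun_prop
  rw [hE]
  refine ⟨?_, integral_nonneg hnn⟩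
  rw [ofReal_integral_eq_lintegral_ofReal hI (Filter.Eventually.of_forall hnn), LL_succ]
  refine lintegral_congr fun x => ?_
  by_cases h : |x| ≤ r
  · rw [indicator_of_mem (show |x| ∈ Iic r from h), ← sq_abs x, (key _ (abs_nonneg x) h).1, hG, wt,
      ENNReal.ofReal_mul (by linarith)]
  · rw [indicator_of_notMem (show |x| ∉ Iic r from h), LL_neg, mul_zero, ENNReal.ofReal_zero]
    rw [← sq_abs x]
    nlinarith

lemma LL1 (a : ℝ) (ha : 0 < a) (r : ℝ) (hr : 0 ≤ r) (hra : r ≤ a) :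
    LL a 1 (r ^ 2) = ENNReal.ofReal (2 * a * √(r ^ 2) - r ^ 2) ∧
      0 ≤ 2 * a * √(r ^ 2) - r ^ 2 := by
  have h := step a ha 0 (fun _ => 1) r hr hra
    (fun t _ _ => by rw [LL_zero, if_pos (sq_nonneg t)]; simp) (fun _ _ _ => zero_le_one)
    continuous_const
  have e : 2 * ∫ y in 0..r, (a - y) * 1 = 2 * a * √(r ^ 2) - r ^ 2 := by
    rw [Real.sqrt_sq hr]
    simp only [mul_one]
    rw [intervalIntegral.integral_sub (by simp) (by simp)]
    simp
    ring
  simpa only [e] using h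

lemma hasDeriv_q (r x : ℝ) (hx : x ∈ Ioo 0 r) :
    HasDerivAt (fun y => √(r ^ 2 - y ^ 2)) (-x / √(r ^ 2 - x ^ 2)) x := by
  have h : 0 < r ^ 2 - x ^ 2 := by nlinarith [hx.1, hx.2]
  have h2 : HasDerivAt (fun y : ℝ => r ^ 2 - y ^ 2) (-(2 * x)) x := by
    simpa using ((hasDerivAt_pow 2 x).const_sub (r ^ 2))
  convert! h2.sqrt h.ne' using 1
  field_simp

lemma hasDeriv_A (r x : ℝ) (hx : x ∈ Ioo 0 r) :
    HasDerivAt (fun y => arcsin (y / r)) (1 / √(r ^ 2 - x ^ 2)) x := by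
  have hr : 0 < r := hx.1.trans hx.2
  have h0 : 0 < x / r := div_pos hx.1 hr
  have h1 : x / r < 1 := (div_lt_one hr).2 hx.2
  have h3 := (Real.hasDerivAt_arcsin (by linarith) h1.ne).comp x ((hasDerivAt_id x).div_const r)
  have h : 0 < r ^ 2 - x ^ 2 := by nlinarith [hx.1, hx.2]
  convert! h3 using 1
  have : √(1 - (x / r) ^ 2) = √(r ^ 2 - x ^ 2) / r := by
    rw [show 1 - (x / r) ^ 2 = (r ^ 2 - x ^ 2) / r ^ 2 by field_simp, Real.sqrt_div h.le,
      Real.sqrt_sq hr.le]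
  rw [this]
  have := Real.sqrt_pos.2 h
  field_simp

lemma int2 (a r : ℝ) (hr : 0 ≤ r) :
    2 * ∫ y in 0..r, (a - y) * (2 * a * √(r ^ 2 - y ^ 2) - (r ^ 2 - y ^ 2)) =
      π * a ^ 2 * r ^ 2 - 8 / 3 * a * r ^ 2 * √(r ^ 2) + (r ^ 2) ^ 2 / 2 := by
  rcases hr.eq_or_lt with rfl | hr0
  · simp
  rw [intervalIntegral.integral_eq_sub_of_hasDerivAt_of_le hr
    (f := fun y => a ^ 2 * (y * √(r ^ 2 - y ^ 2) + r ^ 2 * arcsin (y / r))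
      + 2 * a / 3 * √(r ^ 2 - y ^ 2) ^ 3 - a * (r ^ 2 * y - y ^ 3 / 3)
      + (r ^ 2 * y ^ 2 / 2 - y ^ 4 / 4))]
  · simp [Real.sqrt_sq hr, hr0.ne']
    ring
  · have := Real.continuous_arcsin
    fun_prop
  · intro x hx
    have hq := hasDeriv_q r x hx
    have hA := hasDeriv_A r x hx
    have h : 0 < r ^ 2 - x ^ 2 := by nlinarith [hx.1, hx.2]
    have hp := Real.sqrt_pos.2 h
    have hs := Real.sq_sqrt h.le
    have hi := hasDerivAt_id x
    convert! ((((((hi.mul hq).add (hA.const_mul (r ^ 2))).const_mul (a ^ 2)).add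
      ((hq.pow 3).const_mul (2 * a / 3))).sub
      (((hi.const_mul (r ^ 2)).sub ((hi.pow 3).div_const 3)).const_mul a)).add
      ((((hi.pow 2).const_mul (r ^ 2)).div_const 2).sub ((hi.pow 4).div_const 4))) using 1
    simp only [id, Pi.pow_apply]
    set q := √(r ^ 2 - x ^ 2)
    have hr2 : r ^ 2 = q ^ 2 + x ^ 2 := by linarith
    rw [hr2]
    field_simp
    push_cast
    ring
  · apply Continuous.intervalIntegrable
    fun_prop

lemma LL2 (a : ℝ) (ha : 0 < a) (r : ℝ) (hr : 0 ≤ r) (hra : r ≤ a) :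
    LL a 2 (r ^ 2) = ENNReal.ofReal
      (π * a ^ 2 * r ^ 2 - 8 / 3 * a * r ^ 2 * √(r ^ 2) + (r ^ 2) ^ 2 / 2) ∧
      0 ≤ π * a ^ 2 * r ^ 2 - 8 / 3 * a * r ^ 2 * √(r ^ 2) + (r ^ 2) ^ 2 / 2 := by
  have h := step a ha 1 (fun s => 2 * a * √s - s) r hr hra
    (fun t h0 h1 => (LL1 a ha t h0 h1).1) (fun t h0 h1 => (LL1 a ha t h0 h1).2)
    (by fun_prop)
  simpa only [int2 a r hr] using h

lemma int3 (a r : ℝ) (hr : 0 ≤ r) :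
    2 * ∫ y in 0..r, (a - y) * (π * a ^ 2 * (r ^ 2 - y ^ 2) -
        8 / 3 * a * (r ^ 2 - y ^ 2) * √(r ^ 2 - y ^ 2) + (r ^ 2 - y ^ 2) ^ 2 / 2) =
      4 * π / 3 * a ^ 3 * r ^ 3 - 3 * π / 2 * a ^ 2 * r ^ 4 + 8 / 5 * a * r ^ 5
          - r ^ 6 / 6 - π * a ^ 2 * r ^ 4 / 2 + π * a ^ 2 * r ^ 4 / 2 := by
  rcases hr.eq_or_lt with rfl | hr0
  · simp
  rw [intervalIntegral.integral_eq_sub_of_hasDerivAt_of_le hr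
    (f := fun y => π * a ^ 3 * (r ^ 2 * y - y ^ 3 / 3) - π * a ^ 2 * (r ^ 2 * y ^ 2 / 2 - y ^ 4 / 4)
      + a / 2 * (r ^ 4 * y - 2 * r ^ 2 * y ^ 3 / 3 + y ^ 5 / 5)
      - 1 / 2 * (r ^ 4 * y ^ 2 / 2 - r ^ 2 * y ^ 4 / 2 + y ^ 6 / 6)
      - 8 / 3 * a ^ 2 * (y * √(r ^ 2 - y ^ 2) ^ 3 / 4 +
          3 / 8 * r ^ 2 * (y * √(r ^ 2 - y ^ 2) + r ^ 2 * arcsin (y / r)))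
      - 8 / 15 * a * √(r ^ 2 - y ^ 2) ^ 5)]
  · simp [Real.sqrt_sq hr, hr0.ne']
    ring
  · have := Real.continuous_arcsin
    fun_prop
  · intro x hx
    have hq := hasDeriv_q r x hx
    have hA := hasDeriv_A r x hx
    have h : 0 < r ^ 2 - x ^ 2 := by nlinarith [hx.1, hx.2]
    have hp := Real.sqrt_pos.2 h
    have hs := Real.sq_sqrt h.le
    have hi := hasDerivAt_id x
    convert! ((((((((hi.const_mul (r ^ 2)).sub ((hi.pow 3).div_const 3)).const_mul (π * a ^ 3)).sub
      (((((hi.pow 2).const_mul (r ^ 2)).div_const 2).sub ((hi.pow 4).div_const 4)).const_mul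
        (π * a ^ 2))).add
      ((((hi.const_mul (r ^ 4)).sub (((hi.pow 3).const_mul (2 * r ^ 2)).div_const 3)).add
        ((hi.pow 5).div_const 5)).const_mul (a / 2))).sub
      ((((((hi.pow 2).const_mul (r ^ 4)).div_const 2).sub
        (((hi.pow 4).const_mul (r ^ 2)).div_const 2)).add
        ((hi.pow 6).div_const 6)).const_mul (1 / 2))).sub
      ((((hi.mul (hq.pow 3)).div_const 4).add
        (((hi.mul hq).add (hA.const_mul (r ^ 2))).const_mul (3 / 8 * r ^ 2))).const_mul
        (8 / 3 * a ^ 2))).sub ((hq.pow 5).const_mul (8 / 15 * a))) using 1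
    simp only [id, Pi.pow_apply]
    set q := √(r ^ 2 - x ^ 2)
    have hr2 : r ^ 2 = q ^ 2 + x ^ 2 := by linarith
    rw [show r ^ 4 = (r ^ 2) ^ 2 by ring, hr2]
    field_simp
    push_cast
    ring
  · apply Continuous.intervalIntegrable
    fun_prop

lemma LL3 (a : ℝ) (ha : 0 < a) (r : ℝ) (hr : 0 ≤ r) (hra : r ≤ a) :
    LL a 3 (r ^ 2) = ENNReal.ofReal
      (4 * π / 3 * a ^ 3 * r ^ 3 - 3 * π / 2 * a ^ 2 * r ^ 4 + 8 / 5 * a * r ^ 5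
          - r ^ 6 / 6) := by
  have h := step a ha 2 (fun s => π * a ^ 2 * s - 8 / 3 * a * s * √s + s ^ 2 / 2) r hr hra
    (fun t h0 h1 => (LL2 a ha t h0 h1).1) (fun t h0 h1 => (LL2 a ha t h0 h1).2)
    (by fun_prop)
  rw [h.1, int3 a r hr]
  congr 1
  ring

lemma inter_vol (a : ℝ) (v : EuclideanSpace ℝ (Fin 3)) :
    volume {x : EuclideanSpace ℝ (Fin 3) | x ∈ cube a ∧ x + v ∈ cube a} = ∏ i, wt a (v i) := by
  have : {x : EuclideanSpace ℝ (Fin 3) | x ∈ cube a ∧ x + v ∈ cube a} =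
      (WithLp.ofLp) ⁻¹' (Set.pi univ fun i => Icc (max 0 (-v i)) (min a (a - v i))) := by
    ext x
    simp only [cube, mem_ofPred_eq, mem_preimage, mem_pi, mem_univ, true_implies, mem_Icc,
      PiLp.add_apply, max_le_iff, le_min_iff, ← forall_and]
    refine forall_congr' fun i => ?_
    constructor
    · rintro ⟨⟨h1, h2⟩, h3, h4⟩
      refine ⟨⟨?_, ?_⟩, ?_, ?_⟩ <;> linarith
    · rintro ⟨⟨h1, h2⟩, h3, h4⟩
      refine ⟨⟨?_, ?_⟩, ?_, ?_⟩ <;> linarith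
  rw [this, (PiLp.volume_preserving_ofLp (Fin 3)).measure_preimage
    (MeasurableSet.univ_pi fun i => measurableSet_Icc).nullMeasurableSet, volume_pi_pi]
  refine Finset.prod_congr rfl fun i _ => ?_
  rw [Real.volume_Icc, wt]
  congr 1
  rcases le_total 0 (v i) with h | h
  · rw [abs_of_nonneg h, max_eq_left (by linarith), min_eq_right (by linarith)]; ring
  · rw [abs_of_nonpos h, max_eq_right (by linarith), min_eq_left (by linarith)]

lemma measurableSet_cube (a : ℝ) : MeasurableSet (cube a) := by
  have : cube a = (WithLp.ofLp) ⁻¹' (Set.pi univ fun _ => Icc 0 a) := by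
    ext x; simp only [cube, mem_ofPred_eq, mem_preimage, mem_pi, mem_univ, true_implies]
  rw [this]
  exact (PiLp.volume_preserving_ofLp (Fin 3)).measurable
    (MeasurableSet.univ_pi fun i => measurableSet_Icc)

theorem volume_pairs_dist_le (a : ℝ) (ha : 0 < a) (l : ℝ) (hl0 : 0 ≤ l) (hla : l ≤ a) :
    volume {p : EuclideanSpace ℝ (Fin 3) × EuclideanSpace ℝ (Fin 3) |
        p.1 ∈ cube a ∧ p.2 ∈ cube a ∧ dist p.1 p.2 ≤ l} =
      ENNReal.ofReal
        (4 * π / 3 * a ^ 3 * l ^ 3 - 3 * π / 2 * a ^ 2 * l ^ 4 + 8 / 5 * a * l ^ 5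
          - l ^ 6 / 6) := by
  rw [← LL3 a ha l hl0 hla]
  set S := {p : EuclideanSpace ℝ (Fin 3) × EuclideanSpace ℝ (Fin 3) |
        p.1 ∈ cube a ∧ p.2 ∈ cube a ∧ dist p.1 p.2 ≤ l} with hS
  have hmS : MeasurableSet S :=
    (measurable_fst (measurableSet_cube a)).inter ((measurable_snd (measurableSet_cube a)).inter
      (measurableSet_le (measurable_fst.dist measurable_snd) measurable_const))
  have hm1 : Measurable (S.indicator (fun _ => (1 : ENNReal))) :=
    measurable_const.indicator hmS
  rw [← lintegral_indicator_one hmS, Measure.volume_eq_prod]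
  change ∫⁻ p, S.indicator (fun _ => (1 : ENNReal)) p ∂_ = _
  rw [lintegral_prod _ hm1.aemeasurable]
  have h1 : ∀ x : EuclideanSpace ℝ (Fin 3),
      ∫⁻ y, S.indicator (fun _ => (1 : ENNReal)) (x, y) =
      ∫⁻ v, S.indicator (fun _ => (1 : ENNReal)) (x, x + v) := fun x =>
    (lintegral_add_left_eq_self (fun y => S.indicator (fun _ => (1 : ENNReal)) (x, y)) x).symm
  simp_rw [h1]
  rw [lintegral_lintegral_swap (by
    apply Measurable.aemeasurable
    exact hm1.comp (g := S.indicator (fun _ => (1 : ENNReal)))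
      (f := fun p : EuclideanSpace ℝ (Fin 3) × EuclideanSpace ℝ (Fin 3) => (p.1, p.1 + p.2))
      (by fun_prop))]
  have h2 : ∀ v : EuclideanSpace ℝ (Fin 3),
      ∫⁻ x, S.indicator (fun _ => (1 : ENNReal)) (x, x + v) =
      (∏ i, wt a (v i)) * (if ∑ i, v i ^ 2 ≤ l ^ 2 then 1 else 0) := by
    intro v
    have hd : ∀ x, dist x (x + v) ≤ l ↔ ∑ i, v i ^ 2 ≤ l ^ 2 := by
      intro x
      rw [dist_self_add_right, EuclideanSpace.norm_eq, Real.sqrt_le_left hl0]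
      simp
    split_ifs with h
    · rw [mul_one, ← inter_vol, ← lintegral_indicator_one]
      · refine lintegral_congr fun x => ?_
        have hx : (x, x + v) ∈ S ↔ (x ∈ cube a ∧ x + v ∈ cube a) :=
          ⟨fun hh => ⟨hh.1, hh.2.1⟩, fun hh => ⟨hh.1, hh.2, (hd x).2 h⟩⟩
        by_cases hc : x ∈ cube a ∧ x + v ∈ cube a
        · rw [indicator_of_mem (hx.2 hc), indicator_of_mem (by exact hc), Pi.one_apply]
        · rw [indicator_of_notMem (fun hh => hc (hx.1 hh)), indicator_of_notMem (by exact hc)]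
      · exact (measurableSet_cube a).inter ((measurable_add_const v) (measurableSet_cube a))
    · rw [mul_zero]
      refine (lintegral_congr fun x => ?_).trans lintegral_zero
      rw [indicator_of_notMem]
      rintro ⟨-, -, h3⟩
      exact h ((hd x).1 h3)
  simp_rw [h2]
  exact (PiLp.volume_preserving_ofLp (Fin 3)).lintegral_comp_emb
    (MeasurableEquiv.toLp 2 _).symm.measurableEmbedding
    (fun v : Fin 3 → ℝ => (∏ i, wt a (v i)) * (if ∑ i, v i ^ 2 ≤ l ^ 2 then 1 else 0))
end

section
/- For all l₁, l₂ with √2·a ≤ l₁ ≤ l₂ ≤ √3·a, the volume of {(A,B) ∈ C × C : l₁ ≤ dist(A,B) ≤ l₂} equals a⁶ · ∫_{l₁}^{l₂} P₃(l) dl. That is, on the interval [√2·a, √3·a] the separation of two uniformly random points of C has probability density P₃. -/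
open MeasureTheory Real Set

/-- The density of separations on the range `√2·a ≤ l ≤ √3·a`. -/
noncomputable def P₃ (a l : ℝ) : ℝ :=
  l / a ^ 6 *
    (8 * a * (l ^ 2 + a ^ 2) * Real.sqrt (l ^ 2 - 2 * a ^ 2)
      - (l ^ 2 + a ^ 2) * (l ^ 2 + 5 * a ^ 2)
      + 2 * π * a ^ 2 * (3 * l ^ 2 - 4 * a * l + 3 * a ^ 2)
      + 24 * a ^ 3 * l * Real.arccos (a ^ 2 / (l ^ 2 - a ^ 2))
      - 24 * a ^ 2 * (l ^ 2 + a ^ 2) * Real.arccos (a / Real.sqrt (l ^ 2 - a ^ 2)))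


lemma lint_ftc {F F' : ℝ → ℝ} {x y : ℝ} (hxy : x ≤ y)
    (hd : ∀ t ∈ Icc x y, HasDerivAt F (F' t) t) (hc : ContinuousOn F' (Icc x y))
    (hpos : ∀ t ∈ Ioo x y, 0 ≤ F' t) :
    ∫⁻ t in Ioo x y, ENNReal.ofReal (F' t) = ENNReal.ofReal (F y - F x) ∧ 0 ≤ F y - F x := by
  have hi : IntervalIntegrable F' volume x y := by
    apply ContinuousOn.intervalIntegrable
    rwa [uIcc_of_le hxy]
  have h1 : ∫ t in x..y, F' t = F y - F x := by
    apply intervalIntegral.integral_eq_sub_of_hasDerivAt _ hi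
    rwa [uIcc_of_le hxy]
  have h2 : ∫ t in Ioo x y, F' t = F y - F x := by
    rw [← h1, intervalIntegral.integral_of_le hxy, integral_Ioc_eq_integral_Ioo]
  have hi2 : IntegrableOn F' (Ioo x y) := by
    rw [intervalIntegrable_iff_integrableOn_Ioo_of_le hxy] at hi
    exact hi
  have hae : 0 ≤ᵐ[volume.restrict (Ioo x y)] F' := by
    filter_upwards [ae_restrict_mem measurableSet_Ioo] with t ht using hpos t ht
  rw [← h2]
  exact ⟨(ofReal_integral_eq_lintegral_ofReal hi2 hae).symm,
    integral_nonneg_of_ae hae⟩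

lemma hd_sqrt_sub (c t : ℝ) (h : c < t) :
    HasDerivAt (fun u => √(u - c)) (1 / (2 * √(t - c))) t := by
  have := (((hasDerivAt_id t).sub_const c).sqrt (by simp; linarith))
  simpa using this

lemma hd_sub_sqrt (c t : ℝ) (h : t < c) :
    HasDerivAt (fun u => √(c - u)) (-(1 / (2 * √(c - t)))) t := by
  have := (((hasDerivAt_id' t).const_sub c).sqrt (by simp; linarith))
  convert this using 1
  ring

/-- single density -/
noncomputable def dens (a : ℝ) : ℝ → ENNReal :=
  (Ioo 0 (a ^ 2)).indicator (fun u => ENNReal.ofReal (a / √u - 1))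

noncomputable def gg (a v : ℝ) : ℝ :=
  π * a ^ 2 - 4 * a ^ 2 * arctan (√(v - a ^ 2) / a) + 4 * a * √(v - a ^ 2) - 2 * a ^ 2 - v

noncomputable def G1 (a v u : ℝ) : ℝ :=
  2 * a ^ 2 * arctan (√u / √(v - u)) - 2 * a * √u + 2 * a * √(v - u) + u

lemma hd_G1 (a v u : ℝ) (h0 : 0 < u) (h1 : u < v) :
    HasDerivAt (G1 a v) ((a / √u - 1) * (a / √(v - u) - 1)) u := by
  have hp : HasDerivAt (fun u => √u) (1 / (2 * √u)) u := by
    simpa using hd_sqrt_sub 0 u h0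
  have hq := hd_sub_sqrt v u h1
  have hp0 : 0 < √u := Real.sqrt_pos.2 h0
  have hq0 : 0 < √(v - u) := Real.sqrt_pos.2 (by linarith)
  have hp2 : √u ^ 2 = u := Real.sq_sqrt h0.le
  have hq2 : √(v - u) ^ 2 = v - u := Real.sq_sqrt (by linarith)
  have hd : HasDerivAt (fun u => √u / √(v - u)) _ u := hp.div hq hq0.ne'
  have := (((hd.arctan.const_mul (2 * a ^ 2)).sub (hp.const_mul (2 * a))).add
    (hq.const_mul (2 * a))).add (hasDerivAt_id u)
  have h3 : HasDerivAt (G1 a v) _ u := this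
  refine h3.congr_deriv ?_
  generalize √u = p at *
  generalize √(v - u) = q at *
  have : q ^ 2 + p ^ 2 ≠ 0 := by positivity
  field_simp
  ring

lemma arctan_div_swap {x y : ℝ} (hx : 0 < x) (hy : 0 < y) :
    arctan (x / y) = π / 2 - arctan (y / x) := by
  rw [← arctan_inv_of_pos (by positivity), inv_div]

lemma G1_diff (a v : ℝ) (ha : 0 < a) (h1 : a ^ 2 < v) :
    G1 a v (a ^ 2) - G1 a v (v - a ^ 2) = gg a v := by
  have hm : 0 < √(v - a ^ 2) := Real.sqrt_pos.2 (by linarith)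
  unfold G1 gg
  rw [sub_sub_cancel, Real.sqrt_sq ha.le, arctan_div_swap ha hm]
  ring

lemma dens_fac_pos (a u : ℝ) (ha : 0 < a) (h : u ∈ Ioo 0 (a ^ 2)) : 0 ≤ a / √u - 1 := by
  have : 0 < √u := Real.sqrt_pos.2 h.1
  rw [sub_nonneg, le_div_iff₀ this, one_mul]
  exact (Real.sqrt_le_left ha.le).2 h.2.le

lemma conv2_aux (a v : ℝ) (ha : 0 < a) (h1 : a ^ 2 < v) (h2 : v < 2 * a ^ 2) :
    (dens a ⋆ₗ dens a) v = ENNReal.ofReal (gg a v) ∧ 0 ≤ gg a v := by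
  have key := lint_ftc (F := G1 a v) (F' := fun u => (a / √u - 1) * (a / √(v - u) - 1))
    (x := v - a ^ 2) (y := a ^ 2) (by linarith)
    (fun t ht => hd_G1 a v t (by linarith [ht.1]) (by linarith [ht.2]))
    (by
      refine ContinuousOn.mul (ContinuousOn.sub (ContinuousOn.div ?_ ?_ ?_) ?_)
        (ContinuousOn.sub (ContinuousOn.div ?_ ?_ ?_) ?_)
      any_goals fun_prop
      · exact fun t ht => (Real.sqrt_pos.2 (by linarith [ht.1])).ne'
      · exact fun t ht => (Real.sqrt_pos.2 (by linarith [ht.2])).ne')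
    (fun t ht => mul_nonneg
      (dens_fac_pos a t ha ⟨by linarith [ht.1], by linarith [ht.2]⟩)
      (dens_fac_pos a _ ha ⟨by linarith [ht.2], by linarith [ht.1]⟩))
  rw [G1_diff a v ha h1] at key
  refine ⟨?_, key.2⟩
  rw [← key.1, lconvolution_def, ← lintegral_indicator measurableSet_Ioo]
  congr 1
  ext u
  unfold dens
  by_cases h : u ∈ Ioo (v - a ^ 2) (a ^ 2)
  · have e1 : u ∈ Ioo 0 (a ^ 2) := ⟨by linarith [h.1], by linarith [h.2]⟩
    have e2 : -u + v ∈ Ioo 0 (a ^ 2) := ⟨by linarith [h.2], by linarith [h.1]⟩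
    rw [indicator_of_mem h, indicator_of_mem e1, indicator_of_mem e2,
      ENNReal.ofReal_mul (dens_fac_pos a u ha e1), neg_add_eq_sub]
  · rw [indicator_of_notMem h]
    by_cases e1 : u ∈ Ioo 0 (a ^ 2)
    · have e2 : -u + v ∉ Ioo 0 (a ^ 2) := fun e => h ⟨by linarith [e.2], e1.2⟩
      rw [indicator_of_notMem e2, mul_zero]
    · rw [indicator_of_notMem e1, zero_mul]

lemma conv2_zero (a v : ℝ) (h2 : 2 * a ^ 2 ≤ v) :
    (dens a ⋆ₗ dens a) v = 0 := by
  rw [lconvolution_def]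
  rw [lintegral_eq_zero_of_ae_eq_zero]
  refine Filter.Eventually.of_forall fun u => ?_
  unfold dens
  by_cases e1 : u ∈ Ioo 0 (a ^ 2)
  · have e2 : -u + v ∉ Ioo 0 (a ^ 2) := fun e => by linarith [e.2, e1.2]
    simp only [indicator_of_notMem e2, mul_zero, Pi.zero_apply]
  · simp only [indicator_of_notMem e1, zero_mul, Pi.zero_apply]

noncomputable def W1 (a s v : ℝ) : ℝ :=
  a * ((π * a ^ 2 - 2 * a ^ 2) * (-2 * √(s - v))
    + 4 * a * (-(√(v - a ^ 2) * √(s - v)) + (s - a ^ 2) * arctan (√(v - a ^ 2) / √(s - v)))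
    + 2 * s * √(s - v) - 2 / 3 * √(s - v) ^ 3
    - 4 * a ^ 2 * (-2 * (√(s - v) * arctan (√(v - a ^ 2) / a))
      + 2 * √s * arctan (√s / a * (√(v - a ^ 2) / √(s - v)))
      - 2 * a * arctan (√(v - a ^ 2) / √(s - v))))
  - ((π * a ^ 2 - 2 * a ^ 2) * v - v ^ 2 / 2 + 8 / 3 * a * √(v - a ^ 2) ^ 3
    - 4 * a ^ 2 * (v * arctan (√(v - a ^ 2) / a) - a * √(v - a ^ 2)))

lemma hd_W1 (a s v : ℝ) (ha : 0 < a) (h1 : a ^ 2 < v) (h2 : v < s) :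
    HasDerivAt (W1 a s) (gg a v * (a / √(s - v) - 1)) v := by
  have hp := hd_sqrt_sub (a ^ 2) v h1
  have hq := hd_sub_sqrt s v h2
  have hp0 : 0 < √(v - a ^ 2) := Real.sqrt_pos.2 (by linarith)
  have hq0 : 0 < √(s - v) := Real.sqrt_pos.2 (by linarith)
  have hs0 : 0 < √s := Real.sqrt_pos.2 (by nlinarith [sq_nonneg a])
  have hp2 : √(v - a ^ 2) ^ 2 = v - a ^ 2 := Real.sq_sqrt (by linarith)
  have hq2 : √(s - v) ^ 2 = s - v := Real.sq_sqrt (by linarith)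
  have hs2 : √s ^ 2 = s := Real.sq_sqrt (by nlinarith [sq_nonneg a])
  have hv0 : 0 < v := by nlinarith [sq_nonneg a]
  have hT : HasDerivAt (fun v => arctan (√(v - a ^ 2) / a)) (a / (2 * √(v - a ^ 2) * v)) v := by
    convert (hp.div_const a).arctan using 1
    generalize √(v - a ^ 2) = p at *
    obtain rfl : v = p ^ 2 + a ^ 2 := by linarith
    field_simp
    ring
  have hd : HasDerivAt (fun v => √(v - a ^ 2) / √(s - v)) _ v := hp.div hq hq0.ne'
  have hth : HasDerivAt (fun v => arctan (√(v - a ^ 2) / √(s - v)))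
      (1 / (2 * √(v - a ^ 2) * √(s - v))) v := by
    convert hd.arctan using 1
    generalize √(v - a ^ 2) = p at *
    generalize √(s - v) = q at *
    have : q ^ 2 + p ^ 2 ≠ 0 := by positivity
    field_simp
    ring
  have hA : HasDerivAt (fun v => arctan (√s / a * (√(v - a ^ 2) / √(s - v))))
      (√s * a / (2 * √(v - a ^ 2) * √(s - v) * v)) v := by
    convert (hd.const_mul (√s / a)).arctan using 1
    generalize √(v - a ^ 2) = p at *
    generalize √(s - v) = q at *
    generalize √s = r at *
    obtain rfl : v = p ^ 2 + a ^ 2 := by linarith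
    have hr : r ^ 2 = q ^ 2 + p ^ 2 + a ^ 2 := by linarith
    have : a ^ 2 * q ^ 2 + r ^ 2 * p ^ 2 ≠ 0 := by positivity
    have e : a ^ 2 * q ^ 2 + r ^ 2 * p ^ 2 = (p ^ 2 + q ^ 2) * (p ^ 2 + a ^ 2) := by
      rw [hr]; ring
    have e2 : 1 + (r / a * (p / q)) ^ 2 = (p ^ 2 + q ^ 2) * (p ^ 2 + a ^ 2) / (a ^ 2 * q ^ 2) := by
      rw [← e]; field_simp
    rw [e2]
    field_simp
    ring
  have hid := hasDerivAt_id v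
  have := (((((hq.const_mul (-2)).const_mul (π * a ^ 2 - 2 * a ^ 2)).add
    (((hp.mul hq).neg.add (hth.const_mul (s - a ^ 2))).const_mul (4 * a))).add
    (hq.const_mul (2 * s))).sub ((hq.pow 3).const_mul (2 / 3))).sub
    (((((hq.mul hT).const_mul (-2)).add (hA.const_mul (2 * √s))).sub
      (hth.const_mul (2 * a))).const_mul (4 * a ^ 2))
  have := (this.const_mul a).sub ((((hid.const_mul (π * a ^ 2 - 2 * a ^ 2)).sub
    ((hid.pow 2).div_const 2)).add ((hp.pow 3).const_mul (8 / 3 * a))).sub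
    (((hid.mul hT).sub (hp.const_mul a)).const_mul (4 * a ^ 2)))
  have h3 : HasDerivAt (W1 a s) _ v := this
  refine h3.congr_deriv ?_
  unfold gg
  simp only [id]
  generalize arctan (√(v - a ^ 2) / a) = T
  generalize √(v - a ^ 2) = p at *
  generalize √(s - v) = q at *
  generalize √s = r at *
  clear h3 this hd hT hth hA hp hq
  obtain rfl : v = p ^ 2 + a ^ 2 := by linarith
  obtain rfl : s = q ^ 2 + p ^ 2 + a ^ 2 := by linarith
  have hr : r ^ 2 = q ^ 2 + p ^ 2 + a ^ 2 := by linarith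
  field_simp
  simp only [hr]
  ring

/-- bracket over two -/
noncomputable def HH (a s : ℝ) : ℝ :=
  (8 * a * (s + a ^ 2) * √(s - 2 * a ^ 2)
      - (s + a ^ 2) * (s + 5 * a ^ 2)
      + 2 * π * a ^ 2 * (3 * s - 4 * a * √s + 3 * a ^ 2)
      + 24 * a ^ 3 * √s * arccos (a ^ 2 / (s - a ^ 2))
      - 24 * a ^ 2 * (s + a ^ 2) * arccos (a / √(s - a ^ 2))) / 2

lemma W1_diff (a s : ℝ) (ha : 0 < a) (h1 : 2 * a ^ 2 < s) :
    W1 a s (2 * a ^ 2) - W1 a s (s - a ^ 2) = HH a s := by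
  have ha2 : 0 < a ^ 2 := by positivity
  have hn : 0 < √(s - 2 * a ^ 2) := Real.sqrt_pos.2 (by linarith)
  have hn2 : √(s - 2 * a ^ 2) ^ 2 = s - 2 * a ^ 2 := Real.sq_sqrt (by linarith)
  have hs : 0 < √s := Real.sqrt_pos.2 (by linarith)
  have hs2 : √s ^ 2 = s := Real.sq_sqrt (by linarith)
  have e1 : √(2 * a ^ 2 - a ^ 2) = a := by
    rw [show 2 * a ^ 2 - a ^ 2 = a ^ 2 by ring, Real.sqrt_sq ha.le]
  have e2 : √(s - a ^ 2 - a ^ 2) = √(s - 2 * a ^ 2) := by congr 1; ring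
  have e3 : √(s - (s - a ^ 2)) = a := by rw [sub_sub_cancel, Real.sqrt_sq ha.le]
  have hm : 0 < √(s - a ^ 2) := Real.sqrt_pos.2 (by linarith)
  have hm2 : √(s - a ^ 2) ^ 2 = s - a ^ 2 := Real.sq_sqrt (by linarith)
  have c1 : arccos (a / √(s - a ^ 2)) = arctan (√(s - 2 * a ^ 2) / a) := by
    rw [arccos_eq_arctan (by positivity)]
    congr 1
    have : 1 - (a / √(s - a ^ 2)) ^ 2 = (√(s - 2 * a ^ 2) / √(s - a ^ 2)) ^ 2 := by
      rw [div_pow, div_pow, hm2, hn2]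
      have : s - a ^ 2 ≠ 0 := by linarith
      field_simp; ring
    rw [this, Real.sqrt_sq (by positivity)]
    field_simp
  have c2 : arccos (a ^ 2 / (s - a ^ 2)) = arctan (√s / a * (√(s - 2 * a ^ 2) / a)) := by
    have hh : 0 < s - a ^ 2 := by linarith
    rw [arccos_eq_arctan (by positivity)]
    congr 1
    have : 1 - (a ^ 2 / (s - a ^ 2)) ^ 2 = (√s * √(s - 2 * a ^ 2) / (s - a ^ 2)) ^ 2 := by
      rw [div_pow, div_pow, mul_pow, hs2, hn2]
      field_simp; ring
    rw [this, Real.sqrt_sq (by positivity)]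
    field_simp
  have c3 : 2 * arctan (√s / a * (a / √(s - 2 * a ^ 2))) =
      π - arctan (√s / a * (√(s - 2 * a ^ 2) / a)) := by
    have hlt : √(s - 2 * a ^ 2) < √s := Real.sqrt_lt_sqrt (by linarith) (by linarith)
    have : √s / a * (a / √(s - 2 * a ^ 2)) = √s / √(s - 2 * a ^ 2) := by field_simp
    rw [this, two_mul_arctan_add_pi (by rwa [one_lt_div hn])]
    rw [← sub_eq_zero]
    have : 2 * (√s / √(s - 2 * a ^ 2)) / (1 - (√s / √(s - 2 * a ^ 2)) ^ 2)
        = -(√s / a * (√(s - 2 * a ^ 2) / a)) := by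
      have : 1 - (√s / √(s - 2 * a ^ 2)) ^ 2 = - (2 * a ^ 2) / √(s - 2 * a ^ 2) ^ 2 := by
        rw [div_pow, hs2, hn2]
        have : s - 2 * a ^ 2 ≠ 0 := by linarith
        field_simp; ring
      rw [this]
      field_simp
    rw [this, arctan_neg]
    ring
  have c4 := arctan_div_swap ha hn
  unfold W1 HH
  rw [e1, e2, e3, c1, c2, c4, div_self ha.ne', arctan_one]
  generalize arctan (√s / a * (√(s - 2 * a ^ 2) / a)) = β at *
  generalize arctan (√(s - 2 * a ^ 2) / a) = τ at *
  have c5 : arctan (√s / a * (a / √(s - 2 * a ^ 2))) = (π - β) / 2 := by linarith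
  rw [c5]
  generalize √(s - 2 * a ^ 2) = n at *
  generalize √s = r at *
  clear c1 c2 c3 c4 c5 e1 e2 e3 hm hm2
  obtain rfl : s = n ^ 2 + 2 * a ^ 2 := by linarith
  ring

lemma conv3_aux (a s : ℝ) (ha : 0 < a) (h1 : 2 * a ^ 2 < s) (h2 : s < 3 * a ^ 2) :
    ((dens a ⋆ₗ dens a) ⋆ₗ dens a) s = ENNReal.ofReal (HH a s) ∧ 0 ≤ HH a s := by
  have key := lint_ftc (F := W1 a s) (F' := fun v => gg a v * (a / √(s - v) - 1))
    (x := s - a ^ 2) (y := 2 * a ^ 2) (by linarith)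
    (fun t ht => hd_W1 a s t ha (by linarith [ht.1]) (by linarith [ht.2]))
    (by
      refine ContinuousOn.mul ?_ (ContinuousOn.sub (ContinuousOn.div ?_ ?_ ?_) ?_)
      · unfold gg; fun_prop
      any_goals fun_prop
      · exact fun t ht => (Real.sqrt_pos.2 (by linarith [ht.2])).ne')
    (fun t ht => mul_nonneg
      (conv2_aux a t ha (by linarith [ht.1]) ht.2).2
      (dens_fac_pos a _ ha ⟨by nlinarith [ht.2], by linarith [ht.1]⟩))
  rw [W1_diff a s ha h1] at key
  refine ⟨?_, key.2⟩
  rw [← key.1, lconvolution_def, ← lintegral_indicator measurableSet_Ioo]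
  congr 1
  ext v
  by_cases h : v ∈ Ioo (s - a ^ 2) (2 * a ^ 2)
  · obtain ⟨e1, e0⟩ := conv2_aux a v ha (by linarith [h.1]) h.2
    have e2 : -v + s ∈ Ioo 0 (a ^ 2) := ⟨by linarith [h.2], by linarith [h.1]⟩
    rw [indicator_of_mem h, e1, dens, indicator_of_mem e2,
      ENNReal.ofReal_mul e0, neg_add_eq_sub]
  · rw [indicator_of_notMem h]
    by_cases e1 : v < 2 * a ^ 2
    · have e2 : -v + s ∉ Ioo 0 (a ^ 2) := fun e => h ⟨by linarith [e.2], e1⟩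
      nth_rw 3 [dens]
      rw [indicator_of_notMem e2, mul_zero]
    · rw [conv2_zero a v (by linarith), zero_mul]

lemma HH_P (a l : ℝ) (ha : 0 < a) (hl : 0 < l) : a ^ 6 * P₃ a l = HH a (l ^ 2) * (2 * l) := by
  unfold P₃ HH
  rw [Real.sqrt_sq hl.le]
  field_simp

lemma HH_cont (a : ℝ) (ha : 0 < a) : ContinuousOn (HH a) (Ici (2 * a ^ 2)) := by
  have ha2 : 0 < a ^ 2 := by positivity
  have c1 : ContinuousOn (fun s => arccos (a ^ 2 / (s - a ^ 2))) (Ici (2 * a ^ 2)) := by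
    refine continuous_arccos.comp_continuousOn (ContinuousOn.div (by fun_prop) (by fun_prop) ?_)
    intro t ht
    have : 2 * a ^ 2 ≤ t := ht
    linarith
  have c2 : ContinuousOn (fun s => arccos (a / √(s - a ^ 2))) (Ici (2 * a ^ 2)) := by
    refine continuous_arccos.comp_continuousOn (ContinuousOn.div (by fun_prop) (by fun_prop) ?_)
    intro t ht
    have : 2 * a ^ 2 ≤ t := ht
    exact (Real.sqrt_pos.2 (by linarith)).ne'
  unfold HH
  fun_prop

lemma final_int (a : ℝ) (ha : 0 < a) (l₁ l₂ : ℝ)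
    (h0 : Real.sqrt 2 * a ≤ l₁) (h12 : l₁ ≤ l₂) (h2a : l₂ ≤ Real.sqrt 3 * a) :
    ∫⁻ s in Icc (l₁ ^ 2) (l₂ ^ 2), ((dens a ⋆ₗ dens a) ⋆ₗ dens a) s =
      ENNReal.ofReal (a ^ 6 * ∫ l in l₁..l₂, P₃ a l) := by
  have hl1 : 0 < l₁ := lt_of_lt_of_le (by positivity) h0
  have hs1 : 2 * a ^ 2 ≤ l₁ ^ 2 := by
    calc 2 * a ^ 2 = (√2 * a) ^ 2 := by rw [mul_pow, Real.sq_sqrt (by norm_num)]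
      _ ≤ _ := by gcongr
  have hs2 : l₂ ^ 2 ≤ 3 * a ^ 2 := by
    calc l₂ ^ 2 ≤ (√3 * a) ^ 2 := by gcongr; linarith
      _ = _ := by rw [mul_pow, Real.sq_sqrt (by norm_num)]
  have hs12 : l₁ ^ 2 ≤ l₂ ^ 2 := by gcongr
  have hP : a ^ 6 * ∫ l in l₁..l₂, P₃ a l = ∫ s in (l₁ ^ 2)..(l₂ ^ 2), HH a s := by
    rw [← intervalIntegral.integral_const_mul]
    have : ∫ x in l₁..l₂, (HH a ∘ (fun x : ℝ => x ^ 2)) x * (2 * x)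
        = ∫ s in (l₁ ^ 2)..(l₂ ^ 2), HH a s := by
      apply intervalIntegral.integral_comp_mul_deriv' (f := fun x : ℝ => x ^ 2)
      · intro x _; simpa using hasDerivAt_pow 2 x
      · fun_prop
      · refine (HH_cont a ha).mono ?_
        rintro _ ⟨x, hx, rfl⟩
        rw [uIcc_of_le h12] at hx
        have : l₁ ^ 2 ≤ x ^ 2 := by gcongr; exact hx.1
        exact hs1.trans this
    rw [← this]
    apply intervalIntegral.integral_congr
    intro x hx
    rw [uIcc_of_le h12] at hx
    exact HH_P a x ha (by linarith [hx.1])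
  rw [hP, intervalIntegral.integral_of_le hs12, integral_Ioc_eq_integral_Ioo,
    ← restrict_Ioo_eq_restrict_Icc]
  rw [ofReal_integral_eq_lintegral_ofReal]
  · refine setLIntegral_congr_fun measurableSet_Ioo fun s hs => ?_
    exact (conv3_aux a s ha (by linarith [hs.1]) (by linarith [hs.2])).1
  · refine IntegrableOn.mono_set (t := Icc (l₁ ^ 2) (l₂ ^ 2)) ?_ Ioo_subset_Icc_self
    refine ContinuousOn.integrableOn_Icc ((HH_cont a ha).mono fun x hx => hs1.trans hx.1)
  · filter_upwards [ae_restrict_mem measurableSet_Ioo] with s hs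
    exact (conv3_aux a s ha (by linarith [hs.1]) (by linarith [hs.2])).2

lemma dens_meas (a : ℝ) : Measurable (dens a) := by
  unfold dens
  exact Measurable.indicator (by fun_prop) measurableSet_Ioo

lemma lint_abs_half (F : ℝ → ENNReal) (he : ∀ x, F (-x) = F x) :
    ∫⁻ x, F x = 2 * ∫⁻ x in Ioi 0, F x := by
  rw [← lintegral_add_compl F (measurableSet_Ioi (a := (0:ℝ))), two_mul]
  congr 1
  rw [compl_Ioi, ← restrict_Iio_eq_restrict_Iic, ← lintegral_indicator measurableSet_Iio,
    ← lintegral_indicator measurableSet_Ioi, ← lintegral_neg_eq_self]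
  congr 1
  ext x
  by_cases h : 0 < x
  · rw [indicator_of_mem (by simpa using h), indicator_of_mem (by simpa using h), he]
  · rw [indicator_of_notMem (by simpa using h), indicator_of_notMem (by simpa using h)]

lemma dens_subst (a : ℝ) (ha : 0 < a) (φ : ℝ → ENNReal) :
    ∫⁻ u, dens a u * φ u = ∫⁻ d in Ioo 0 a, ENNReal.ofReal (2 * (a - d)) * φ (d ^ 2) := by
  have e1 : ∀ u, dens a u * φ u =
      (Ioo 0 (a ^ 2)).indicator (fun u => ENNReal.ofReal (a / √u - 1) * φ u) u := by
    intro u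
    unfold dens
    by_cases h : u ∈ Ioo 0 (a ^ 2)
    · rw [indicator_of_mem h, indicator_of_mem h]
    · rw [indicator_of_notMem h, indicator_of_notMem h, zero_mul]
  simp_rw [e1]
  rw [lintegral_indicator measurableSet_Ioo]
  have him : (fun d : ℝ => d ^ 2) '' Ioo 0 a = Ioo 0 (a ^ 2) := by
    ext u
    constructor
    · rintro ⟨d, hd, rfl⟩
      exact ⟨by have := hd.1; positivity, by have := hd.1; have := hd.2; simp only; gcongr⟩
    · intro hu
      refine ⟨√u, ⟨Real.sqrt_pos.2 hu.1, ?_⟩, Real.sq_sqrt hu.1.le⟩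
      rw [Real.sqrt_lt' ha]; exact hu.2
  rw [← him, lintegral_image_eq_lintegral_abs_deriv_mul measurableSet_Ioo (f' := fun d => 2 * d)]
  · refine setLIntegral_congr_fun measurableSet_Ioo fun d hd => ?_
    have hd0 := hd.1
    rw [← mul_assoc, ← ENNReal.ofReal_mul (abs_nonneg _), Real.sqrt_sq hd0.le,
      abs_of_pos (by positivity)]
    congr 2
    field_simp
  · intro d _
    simpa using (hasDerivAt_pow 2 d).hasDerivWithinAt
  · intro x hx y hy h
    exact (pow_left_inj₀ hx.1.le hy.1.le two_ne_zero).1 h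

lemma overlap (a d : ℝ) :
    ∫⁻ x, (Icc 0 a).indicator (1 : ℝ → ENNReal) x * (Icc 0 a).indicator 1 (x - d) =
      ENNReal.ofReal (a - |d|) := by
  have : ∀ x, (Icc 0 a).indicator (1 : ℝ → ENNReal) x * (Icc 0 a).indicator 1 (x - d) =
      (Icc (max 0 d) (min a (a + d))).indicator 1 x := by
    intro x
    simp only [indicator_apply, mem_Icc, max_le_iff, le_min_iff, sub_nonneg, Pi.one_apply,
      sub_le_iff_le_add]
    split_ifs <;> simp_all
  simp_rw [this]
  rw [lintegral_indicator_one measurableSet_Icc, Real.volume_Icc]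
  congr 1
  rcases le_total 0 d with h | h
  · rw [max_eq_right h, min_eq_left (by linarith), abs_of_nonneg h]
  · rw [max_eq_left h, min_eq_right (by linarith), abs_of_nonpos h]; ring

lemma sq_map (a : ℝ) (ha : 0 < a) :
    ((volume.restrict (Icc 0 a)).prod (volume.restrict (Icc 0 a))).map
      (fun p : ℝ × ℝ => (p.1 - p.2) ^ 2) = volume.withDensity (dens a) := by
  refine Measure.ext_of_lintegral _ fun φ hφ => ?_
  rw [lintegral_map hφ (by fun_prop), lintegral_prod _ (by fun_prop),
    lintegral_withDensity_eq_lintegral_mul _ (dens_meas a) hφ]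
  simp only [Pi.mul_apply]
  rw [dens_subst a ha]
  have hI : Measurable ((Icc 0 a).indicator (1 : ℝ → ENNReal)) :=
    measurable_one.indicator measurableSet_Icc
  have e1 : ∀ ψ : ℝ → ENNReal, ∫⁻ x in Icc 0 a, ψ x =
      ∫⁻ x, (Icc 0 a).indicator 1 x * ψ x := by
    intro ψ
    rw [← lintegral_indicator measurableSet_Icc]
    congr 1
    ext x
    by_cases h : x ∈ Icc 0 a
    · rw [indicator_of_mem h, indicator_of_mem h, Pi.one_apply, one_mul]
    · rw [indicator_of_notMem h, indicator_of_notMem h, zero_mul]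
  have e2 : ∫⁻ x in Icc 0 a, ∫⁻ y in Icc 0 a, φ ((x - y) ^ 2) =
      ∫⁻ x, ∫⁻ d, (Icc 0 a).indicator 1 x * ((Icc 0 a).indicator 1 (x - d) * φ (d ^ 2)) := by
    rw [e1]
    congr 1
    ext x
    rw [e1, lintegral_const_mul _ (by fun_prop)]
    congr 1
    rw [← lintegral_sub_left_eq_self _ x]
    simp
  rw [e2, lintegral_lintegral_swap (by fun_prop)]
  have e3 : ∀ d, ∫⁻ x, (Icc 0 a).indicator 1 x * ((Icc 0 a).indicator 1 (x - d) * φ (d ^ 2)) =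
      ENNReal.ofReal (a - |d|) * φ (d ^ 2) := by
    intro d
    rw [← overlap, ← lintegral_mul_const _ (by fun_prop)]
    simp_rw [mul_assoc]
  simp_rw [e3]
  rw [lint_abs_half _ (by simp), ← lintegral_const_mul _ (by fun_prop)]
  rw [← Ioo_union_Ici_eq_Ioi ha, lintegral_union measurableSet_Ici
    (Set.disjoint_left.2 fun x hx hy => absurd hx.2 (not_lt.2 hy))]
  have z : ∫⁻ x in Ici a, 2 * (ENNReal.ofReal (a - |x|) * φ (x ^ 2)) = 0 := by
    rw [setLIntegral_congr_fun (g := fun _ => 0) measurableSet_Ici]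
    · simp
    · intro x hx
      have : a - |x| ≤ 0 := by have := le_abs_self x; have : a ≤ x := hx; linarith
      simp [ENNReal.ofReal_of_nonpos this]
  rw [z, add_zero]
  refine setLIntegral_congr_fun measurableSet_Ioo fun x hx => ?_
  rw [abs_of_pos hx.1, ENNReal.ofReal_mul (by norm_num), mul_assoc]
  simp

lemma pi_sum_map (ν : Measure ℝ) [IsFiniteMeasure ν] :
    (Measure.pi (fun _ : Fin 3 => ν)).map (fun w => w 0 + (w 1 + w 2)) =
      Measure.conv ν (Measure.conv ν ν) := by
  have m1 := measurePreserving_piFinSuccAbove (fun _ : Fin 3 => ν) 0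
  have m2 := measurePreserving_finTwoArrow ν
  have m3 : MeasurePreserving (fun p : ℝ × ℝ => p.1 + p.2) (ν.prod ν) (Measure.conv ν ν) :=
    ⟨by fun_prop, rfl⟩
  have m4 : MeasurePreserving (fun p : ℝ × ℝ => p.1 + p.2) (ν.prod (Measure.conv ν ν))
      (Measure.conv ν (Measure.conv ν ν)) :=
    ⟨by fun_prop, rfl⟩
  have m5 := m4.comp ((MeasurePreserving.prod (MeasurePreserving.id ν) (m3.comp m2)).comp m1)
  rw [← m5.map_eq]
  rfl

lemma set_vol (a l₁ l₂ : ℝ) (hl : 0 ≤ l₁) (hl2 : 0 ≤ l₂) (ha : 0 < a) :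
    volume {p : EuclideanSpace ℝ (Fin 3) × EuclideanSpace ℝ (Fin 3) |
        p.1 ∈ cube a ∧ p.2 ∈ cube a ∧ l₁ ≤ dist p.1 p.2 ∧ dist p.1 p.2 ≤ l₂} =
      ∫⁻ s in Icc (l₁ ^ 2) (l₂ ^ 2), ((dens a ⋆ₗ dens a) ⋆ₗ dens a) s := by
  set μ := (volume.restrict (Icc 0 a) : Measure ℝ) with hμ
  have hν := sq_map a ha
  rw [← hμ] at hν
  have hfin : IsFiniteMeasure (volume.withDensity (dens a)) := by
    rw [← hν]; infer_instance
  have hconv := pi_sum_map (volume.withDensity (dens a))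
  rw [conv_withDensity_eq_lconvolution (dens_meas a) (dens_meas a),
    conv_withDensity_eq_lconvolution (dens_meas a)
      (measurable_lconvolution _ (dens_meas a) (dens_meas a)),
    lconvolution_comm] at hconv
  rw [← withDensity_apply _ measurableSet_Icc, ← hconv,
    Measure.map_apply (by fun_prop) measurableSet_Icc]
  have hfin' : ∀ i : Fin 3, SigmaFinite ((μ.prod μ).map (fun p : ℝ × ℝ => (p.1 - p.2) ^ 2)) := by
    intro i; infer_instance
  have hpi := Measure.pi_map_pi (ι := Fin 3) (μ := fun _ => μ.prod μ)
    (f := fun _ (p : ℝ × ℝ) => (p.1 - p.2) ^ 2) (fun i => by fun_prop)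
  simp only [hν] at hpi
  rw [← hpi, Measure.map_apply (by fun_prop) (measurableSet_Icc.preimage (by fun_prop))]
  have hr : Measure.pi (fun _ : Fin 3 => μ.prod μ) =
      (volume : Measure (Fin 3 → ℝ × ℝ)).restrict (univ.pi fun _ => Icc 0 a ×ˢ Icc 0 a) := by
    rw [volume_pi, Measure.restrict_pi_pi]
    congr 1
    ext1 i
    rw [hμ, Measure.prod_restrict]; rfl
  rw [hr, Measure.restrict_apply (by measurability)]
  have mp : MeasurePreserving (fun q : Fin 3 → ℝ × ℝ =>
      ((WithLp.toLp 2 (fun i => (q i).1) : EuclideanSpace ℝ (Fin 3)),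
       (WithLp.toLp 2 (fun i => (q i).2) : EuclideanSpace ℝ (Fin 3)))) volume volume := by
    have t := PiLp.volume_preserving_toLp (Fin 3)
    exact (t.prod t).comp (volume_measurePreserving_arrowProdEquivProdArrow ℝ ℝ (Fin 3))
  rw [← mp.measure_preimage]
  · congr 1
    ext q
    simp only [mem_preimage, mem_ofPred_eq, cube, mem_inter_iff, mem_pi, mem_univ, mem_prod,
      EuclideanSpace.dist_eq, Fin.sum_univ_three, Real.dist_eq, sq_abs, mem_Icc, forall_true_left]
    rw [Real.le_sqrt hl, Real.sqrt_le_left hl2, add_assoc]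
    constructor
    · rintro ⟨h1, h2, h3⟩
      exact ⟨h3, fun i => ⟨h1 i, h2 i⟩⟩
    · rintro ⟨h3, h⟩
      exact ⟨fun i => (h i).1, fun i => (h i).2, h3⟩
    positivity
  · apply MeasurableSet.nullMeasurableSet
    have hc : MeasurableSet (cube a) := by
      have : cube a = ⋂ i, {x : EuclideanSpace ℝ (Fin 3) | x i ∈ Icc 0 a} := by
        ext; simp [cube]
      rw [this]
      exact MeasurableSet.iInter fun i => measurableSet_Icc.preimage (by fun_prop)
    have hd : Measurable (fun p : EuclideanSpace ℝ (Fin 3) × EuclideanSpace ℝ (Fin 3) =>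
        dist p.1 p.2) := measurable_fst.dist measurable_snd
    exact (hc.preimage measurable_fst).inter ((hc.preimage measurable_snd).inter
      ((measurableSet_le measurable_const hd).inter (measurableSet_le hd measurable_const)))

theorem density_on_third_range (a : ℝ) (ha : 0 < a) (l₁ l₂ : ℝ)
    (h0 : Real.sqrt 2 * a ≤ l₁) (h12 : l₁ ≤ l₂) (h2a : l₂ ≤ Real.sqrt 3 * a) :
    volume {p : EuclideanSpace ℝ (Fin 3) × EuclideanSpace ℝ (Fin 3) |
        p.1 ∈ cube a ∧ p.2 ∈ cube a ∧ l₁ ≤ dist p.1 p.2 ∧ dist p.1 p.2 ≤ l₂} =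
      ENNReal.ofReal (a ^ 6 * ∫ l in l₁..l₂, P₃ a l) := by
  have hl1 : 0 ≤ l₁ := le_trans (by positivity) h0
  rw [set_vol a l₁ l₂ hl1 (hl1.trans h12) ha, final_int a ha l₁ l₂ h0 h12 h2a]
end

section
/- The normalization condition holds: ∫₀^a P₁(l) dl + ∫_a^{√2·a} P₂(l) dl + ∫_{√2·a}^{√3·a} P₃(l) dl = 1. -/
open MeasureTheory Real Set

/-- The density of separations on the range `0 ≤ l ≤ a`. -/
noncomputable def P₁ (a l : ℝ) : ℝ :=
  l ^ 2 * (4 * π * a ^ 3 - 6 * π * a ^ 2 * l + 8 * a * l ^ 2 - l ^ 3) / a ^ 6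

/-- The density of separations on the range `a ≤ l ≤ √2·a`. -/
noncomputable def P₂ (a l : ℝ) : ℝ :=
  l / a ^ 6 *
    (2 * l ^ 4 + 6 * a ^ 2 * l ^ 2 - a ^ 4 - 2 * π * a ^ 3 * (4 * l - 3 * a)
      - 8 * a * (2 * l ^ 2 + a ^ 2) * Real.sqrt (l ^ 2 - a ^ 2)
      + 24 * a ^ 2 * l ^ 2 * Real.arccos (a / l))

lemma aux1 : (∫ l in (0:ℝ)..1, P₁ 1 l) = 43 / 30 - π / 6 := by
  have h : ∀ x ∈ Set.uIcc (0:ℝ) 1, HasDerivAt (fun l : ℝ =>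
      4 * π * l ^ 3 / 3 - 6 * π * l ^ 4 / 4 + 8 * l ^ 5 / 5 - l ^ 6 / 6) (P₁ 1 x) x := by
    intro x _
    have h3 := ((hasDerivAt_pow 3 x).const_mul (4 * π)).div_const 3
    have h4 := ((hasDerivAt_pow 4 x).const_mul (6 * π)).div_const 4
    have h5 := ((hasDerivAt_pow 5 x).const_mul 8).div_const 5
    have h6 := (hasDerivAt_pow 6 x).div_const 6
    refine (((h3.sub h4).add h5).sub h6).congr_deriv ?_
    simp only [P₁]
    push_cast
    ring
  rw [intervalIntegral.integral_eq_sub_of_hasDerivAt h]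
  · ring
  · apply Continuous.intervalIntegrable
    unfold P₁
    fun_prop

lemma aux2 : (∫ l in (1:ℝ)..√2, P₂ 1 l) =
    (8 / 3 + 6 - 1 - 8 * π / 3 * (2 * √2) + 6 * π - 16 / 5 - 16 + 6 * π)
      - (1 / 3 + 3 / 2 - 1 / 2 - 8 * π / 3 + 3 * π) := by
  have h12 : (1:ℝ) ≤ √2 := by rw [Real.one_le_sqrt]; norm_num
  have hcongr : (∫ l in (1:ℝ)..√2, P₂ 1 l) = ∫ l in (1:ℝ)..√2,
      (2 * l ^ 5 + 6 * l ^ 3 - l - 8 * π * l ^ 2 + 6 * π * l - 8 * (2 * l ^ 3 + l) * √(l ^ 2 - 1)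
        + 24 * l ^ 3 * arctan √(l ^ 2 - 1)) := by
    apply intervalIntegral.integral_congr
    intro l hl
    rw [Set.uIcc_of_le h12] at hl
    have h1 : 1 ≤ l := hl.1
    have : arctan √(l ^ 2 - 1) = arccos (1 / l) := by
      rw [Real.arctan_eq_arccos (Real.sqrt_nonneg _), Real.sq_sqrt (by nlinarith),
        show 1 + (l ^ 2 - 1) = l ^ 2 by ring, Real.sqrt_sq (by linarith), one_div]
    simp only [P₂]
    rw [this, show (1:ℝ) ^ 2 = 1 by norm_num]
    ring
  rw [hcongr, intervalIntegral.integral_eq_sub_of_hasDerivAt_of_le (f := fun l : ℝ =>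
    l ^ 6 / 3 + 3 * l ^ 4 / 2 - l ^ 2 / 2 - 8 * π / 3 * l ^ 3 + 3 * π * l ^ 2
      - 16 / 5 * √(l ^ 2 - 1) ^ 5 - 10 * √(l ^ 2 - 1) ^ 3 + 6 * l ^ 4 * arctan √(l ^ 2 - 1)
      - 6 * √(l ^ 2 - 1)) h12]
  · have e2 : √2 ^ 2 = 2 := Real.sq_sqrt (by norm_num)
    have e3 : √2 ^ 3 = 2 * √2 := by rw [pow_succ, e2]
    have e4 : √2 ^ 4 = 4 := by rw [show √2 ^ 4 = (√2 ^ 2) ^ 2 by ring, e2]; norm_num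
    have e6 : √2 ^ 6 = 8 := by rw [show √2 ^ 6 = (√2 ^ 2) ^ 3 by ring, e2]; norm_num
    simp only [e2, e3, e4, e6]
    rw [show (2:ℝ) - 1 = 1 by norm_num, show (1:ℝ) ^ 2 - 1 = 0 by norm_num]
    simp only [Real.sqrt_one, Real.sqrt_zero, Real.arctan_one, Real.arctan_zero]
    ring
  · apply Continuous.continuousOn
    fun_prop
  · intro x hx
    have hx1 : 1 < x := hx.1
    have hp : 0 < x ^ 2 - 1 := by nlinarith
    have hs : 0 < √(x ^ 2 - 1) := Real.sqrt_pos.2 hp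
    have hs2 : √(x ^ 2 - 1) ^ 2 = x ^ 2 - 1 := Real.sq_sqrt hp.le
    have hd : HasDerivAt (fun l : ℝ => √(l ^ 2 - 1)) (x / √(x ^ 2 - 1)) x := by
      have := ((hasDerivAt_pow 2 x).sub_const 1).sqrt hp.ne'
      convert this using 1
      push_cast; field_simp; try ring
    have hA : HasDerivAt (fun l : ℝ => arctan √(l ^ 2 - 1)) (1 / (x * √(x ^ 2 - 1))) x := by
      convert hd.arctan using 1
      rw [hs2]
      field_simp; try ring
    have d6 := (hasDerivAt_pow 6 x).div_const 3
    have d4 := ((hasDerivAt_pow 4 x).const_mul 3).div_const 2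
    have d2 := (hasDerivAt_pow 2 x).div_const 2
    have d3 := (hasDerivAt_pow 3 x).const_mul (8 * π / 3)
    have d2' := (hasDerivAt_pow 2 x).const_mul (3 * π)
    have s5 := (hd.pow 5).const_mul (16 / 5)
    have s3 := (hd.pow 3).const_mul 10
    have sA := ((hasDerivAt_pow 4 x).const_mul 6).mul hA
    have s1 := hd.const_mul 6
    refine ((((((((d6.add d4).sub d2).sub d3).add d2').sub s5).sub s3).add sA).sub s1).congr_deriv ?_
    push_cast
    generalize √(x ^ 2 - 1) = s at *
    have hx0 : x ≠ 0 := by linarith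
    generalize arctan s = A at *
    have key : x ^ 2 = s ^ 2 + 1 := by linarith
    field_simp
    clear hd hA d6 d4 d2 d3 d2' s5 s3 sA s1
    have k3 : x ^ 3 = x * (s ^ 2 + 1) := by rw [← key]; ring
    have k4 : x ^ 4 = (s ^ 2 + 1) ^ 2 := by rw [← key]; ring
    have k5 : x ^ 5 = x * (s ^ 2 + 1) ^ 2 := by rw [← key]; ring
    ring_nf
    simp only [key, k3, k4, k5]
    ring
  · apply Continuous.intervalIntegrable
    fun_prop

lemma aux3 : (∫ l in √2..√3, P₃ 1 l) =
    (8 / 5 + 10 - 27 / 6 - 27 / 2 - 15 / 2 + 27 * π / 2 - 8 * π / 3 * (3 * √3) + 9 * π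
       + 8 * (3 * √3) * (π / 3) + 14 + (2 - 54 - 36) * (π / 4))
      - (- 8 / 6 - 6 - 5 + 6 * π - 8 * π / 3 * (2 * √2) + 6 * π) := by
  have h23 : √2 ≤ √3 := Real.sqrt_le_sqrt (by norm_num)
  have hcongr : (∫ l in √2..√3, P₃ 1 l) = ∫ l in √2..√3,
      (8 * (l ^ 3 + l) * √(l ^ 2 - 2) - (l ^ 5 + 6 * l ^ 3 + 5 * l) + 6 * π * l ^ 3 - 8 * π * l ^ 2
        + 6 * π * l + 24 * l ^ 2 * arctan (l * √(l ^ 2 - 2))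
        - 24 * (l ^ 3 + l) * arctan √(l ^ 2 - 2)) := by
    apply intervalIntegral.integral_congr
    intro l hl
    rw [Set.uIcc_of_le h23] at hl
    have h0 : 0 ≤ l := (Real.sqrt_nonneg _).trans hl.1
    have h1 : 2 ≤ l ^ 2 := (Real.sqrt_le_left h0).1 hl.1
    have hB : arctan √(l ^ 2 - 2) = arccos (1 / √(l ^ 2 - 1)) := by
      rw [Real.arctan_eq_arccos (Real.sqrt_nonneg _), Real.sq_sqrt (by linarith),
        show 1 + (l ^ 2 - 2) = l ^ 2 - 1 by ring, one_div]
    have hA : arctan (l * √(l ^ 2 - 2)) = arccos (1 / (l ^ 2 - 1)) := by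
      rw [Real.arctan_eq_arccos (mul_nonneg h0 (Real.sqrt_nonneg _)), mul_pow,
        Real.sq_sqrt (by linarith),
        show 1 + l ^ 2 * (l ^ 2 - 2) = (l ^ 2 - 1) ^ 2 by ring, Real.sqrt_sq (by linarith), one_div]
    simp only [P₃]
    rw [hA, hB, show (1:ℝ) ^ 2 = 1 by norm_num, mul_one (2:ℝ)]
    ring
  rw [hcongr, intervalIntegral.integral_eq_sub_of_hasDerivAt_of_le (f := fun l : ℝ =>
    8 / 5 * √(l ^ 2 - 2) ^ 5 + 10 * √(l ^ 2 - 2) ^ 3 - l ^ 6 / 6 - 3 * l ^ 4 / 2 - 5 * l ^ 2 / 2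
      + 3 * π / 2 * l ^ 4 - 8 * π / 3 * l ^ 3 + 3 * π * l ^ 2
      + 8 * l ^ 3 * arctan (l * √(l ^ 2 - 2)) + 14 * √(l ^ 2 - 2)
      + (2 - 6 * l ^ 4 - 12 * l ^ 2) * arctan √(l ^ 2 - 2)) h23]
  · have e2 : √2 ^ 2 = 2 := Real.sq_sqrt (by norm_num)
    have e3 : √2 ^ 3 = 2 * √2 := by rw [pow_succ, e2]
    have e4 : √2 ^ 4 = 4 := by rw [show √2 ^ 4 = (√2 ^ 2) ^ 2 by ring, e2]; norm_num
    have e6 : √2 ^ 6 = 8 := by rw [show √2 ^ 6 = (√2 ^ 2) ^ 3 by ring, e2]; norm_num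
    have f2 : √3 ^ 2 = 3 := Real.sq_sqrt (by norm_num)
    have f3 : √3 ^ 3 = 3 * √3 := by rw [pow_succ, f2]
    have f4 : √3 ^ 4 = 9 := by rw [show √3 ^ 4 = (√3 ^ 2) ^ 2 by ring, f2]; norm_num
    have f6 : √3 ^ 6 = 27 := by rw [show √3 ^ 6 = (√3 ^ 2) ^ 3 by ring, f2]; norm_num
    have hA : arctan √3 = π / 3 := by
      rw [← Real.tan_pi_div_three]
      apply Real.arctan_tan <;> linarith [Real.pi_pos]
    simp only [e2, e3, e4, e6, f2, f3, f4, f6]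
    rw [show (3:ℝ) - 2 = 1 by norm_num, show (2:ℝ) - 2 = 0 by norm_num]
    simp only [Real.sqrt_one, Real.sqrt_zero, Real.arctan_one, Real.arctan_zero, mul_one, mul_zero,
      hA]
    ring
  · apply Continuous.continuousOn
    fun_prop
  · intro x hx
    have hx0 : 0 < x := (Real.sqrt_pos.2 (by norm_num : (0:ℝ) < 2)).trans hx.1
    have hx1 : 2 < x ^ 2 := (Real.sqrt_lt' hx0).1 hx.1
    have hp : 0 < x ^ 2 - 2 := by linarith
    have hp1 : 0 < x ^ 2 - 1 := by linarith
    have hs : 0 < √(x ^ 2 - 2) := Real.sqrt_pos.2 hp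
    have hs2 : √(x ^ 2 - 2) ^ 2 = x ^ 2 - 2 := Real.sq_sqrt hp.le
    have hd : HasDerivAt (fun l : ℝ => √(l ^ 2 - 2)) (x / √(x ^ 2 - 2)) x := by
      have := ((hasDerivAt_pow 2 x).sub_const 2).sqrt hp.ne'
      convert this using 1
      push_cast; field_simp; try ring
    have hB : HasDerivAt (fun l : ℝ => arctan √(l ^ 2 - 2))
        (x / ((√(x ^ 2 - 2) ^ 2 + 1) * √(x ^ 2 - 2))) x := by
      convert hd.arctan using 1
      field_simp; try ring
    have hA : HasDerivAt (fun l : ℝ => arctan (l * √(l ^ 2 - 2)))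
        (2 / ((√(x ^ 2 - 2) ^ 2 + 1) * √(x ^ 2 - 2))) x := by
      have hm : HasDerivAt (fun l : ℝ => l * √(l ^ 2 - 2))
          (1 * √(x ^ 2 - 2) + x * (x / √(x ^ 2 - 2))) x := (hasDerivAt_id' x).mul hd
      convert hm.arctan using 1
      rw [mul_pow, show 1 + x ^ 2 * √(x ^ 2 - 2) ^ 2 = (√(x ^ 2 - 2) ^ 2 + 1) ^ 2 by
        rw [hs2]; ring]
      field_simp
      rw [hs2]; ring
    have s5 := (hd.pow 5).const_mul (8 / 5)
    have s3 := (hd.pow 3).const_mul 10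
    have d6 := (hasDerivAt_pow 6 x).div_const 6
    have d4 := ((hasDerivAt_pow 4 x).const_mul 3).div_const 2
    have d2 := ((hasDerivAt_pow 2 x).const_mul 5).div_const 2
    have d4' := (hasDerivAt_pow 4 x).const_mul (3 * π / 2)
    have d3 := (hasDerivAt_pow 3 x).const_mul (8 * π / 3)
    have d2' := (hasDerivAt_pow 2 x).const_mul (3 * π)
    have sA := ((hasDerivAt_pow 3 x).const_mul 8).mul hA
    have s1 := hd.const_mul 14
    have sB := ((((hasDerivAt_pow 4 x).const_mul 6).const_sub 2).sub
      ((hasDerivAt_pow 2 x).const_mul 12)).mul hB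
    refine ((((((((((s5.add s3).sub d6).sub d4).sub d2).add d4').sub d3).add d2').add sA).add
      s1).add sB).congr_deriv ?_
    simp only [Pi.sub_apply]
    push_cast
    clear hd hA hB d6 d4 d2 d3 d2' d4' s5 s3 sA s1 sB
    generalize arctan (x * √(x ^ 2 - 2)) = A at *
    generalize √(x ^ 2 - 2) = s at *
    generalize arctan s = B at *
    have key : x ^ 2 = s ^ 2 + 2 := by linarith
    field_simp
    have k3 : x ^ 3 = x * (s ^ 2 + 2) := by rw [← key]; ring
    have k4 : x ^ 4 = (s ^ 2 + 2) ^ 2 := by rw [← key]; ring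
    have k5 : x ^ 5 = x * (s ^ 2 + 2) ^ 2 := by rw [← key]; ring
    ring_nf
    simp only [key, k3, k4, k5]
    ring
  · apply Continuous.intervalIntegrable
    fun_prop

lemma scale1 (a x : ℝ) (ha : 0 < a) : P₁ a (a * x) = a⁻¹ * P₁ 1 x := by
  unfold P₁
  field_simp

lemma scale2 (a x : ℝ) (ha : 0 < a) : P₂ a (a * x) = a⁻¹ * P₂ 1 x := by
  unfold P₂
  rw [show (a * x) ^ 2 - a ^ 2 = a ^ 2 * (x ^ 2 - 1 ^ 2) by ring,
    Real.sqrt_mul (sq_nonneg a), Real.sqrt_sq ha.le,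
    show a / (a * x) = 1 / x by rw [div_mul_eq_div_div, div_self ha.ne']]
  generalize √(x ^ 2 - 1 ^ 2) = s
  generalize arccos (1 / x) = A
  field_simp

lemma scale3 (a x : ℝ) (ha : 0 < a) : P₃ a (a * x) = a⁻¹ * P₃ 1 x := by
  unfold P₃
  rw [show (a * x) ^ 2 - 2 * a ^ 2 = a ^ 2 * (x ^ 2 - 2 * 1 ^ 2) by ring,
    show (a * x) ^ 2 - a ^ 2 = a ^ 2 * (x ^ 2 - 1 ^ 2) by ring,
    Real.sqrt_mul (sq_nonneg a), Real.sqrt_mul (sq_nonneg a), Real.sqrt_sq ha.le,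
    div_mul_eq_div_div, div_mul_eq_div_div, div_self ha.ne', div_self (pow_ne_zero 2 ha.ne'),
    show (1:ℝ) ^ 2 = 1 by norm_num]
  generalize √(x ^ 2 - 2 * 1) = s
  generalize arccos (1 / √(x ^ 2 - 1)) = A
  generalize arccos (1 / (x ^ 2 - 1)) = B
  field_simp

lemma scaleInt (a : ℝ) (ha : 0 < a) (P : ℝ → ℝ → ℝ)
    (h : ∀ x, P a (a * x) = a⁻¹ * P 1 x) (u v : ℝ) :
    (∫ l in (a * u)..(a * v), P a l) = ∫ l in u..v, P 1 l := by
  rw [← intervalIntegral.mul_integral_comp_mul_left, ← intervalIntegral.integral_const_mul]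
  congr 1
  funext x
  rw [h]
  field_simp

theorem normalization (a : ℝ) (ha : 0 < a) :
    (∫ l in (0:ℝ)..a, P₁ a l) + (∫ l in a..(Real.sqrt 2 * a), P₂ a l)
      + (∫ l in (Real.sqrt 2 * a)..(Real.sqrt 3 * a), P₃ a l) = 1 := by
  have h1 := scaleInt a ha P₁ (fun x => scale1 a x ha) 0 1
  have h2 := scaleInt a ha P₂ (fun x => scale2 a x ha) 1 √2
  have h3 := scaleInt a ha P₃ (fun x => scale3 a x ha) √2 √3
  rw [mul_zero, mul_one] at h1
  rw [mul_one, mul_comm a] at h2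
  rw [mul_comm a, mul_comm a] at h3
  rw [h1, h2, h3, aux1, aux2, aux3]
  ring
end
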